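/- Let α be a strongly continuous one-parameter isometric representation on a Banach space E and z ∈ ℂ. Then the analytic continuation α_z is injective and its inverse is α_{-z}; consequently Ran α_z = D(α_{-z}) and D(α_z) = Ran α_{-z}. -/

import Mathlib

open Complex MeasureTheory Filter Topology Set

noncomputable section

/-- The closed horizontal strip between the real axis and the line `Im = z.im`. -/
def hStrip (z : ℂ) : Set ℂ := {y : ℂ | y.im ∈ Set.uIcc 0 z.im}

/-- A strongly continuous one-parameter (contractive, hence isometric) representation. -/
structure IsOneParamRep {E : Type*} [NormedAddCommGroup E] [NormedSpace ℂ E]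
    (α : ℝ → E →L[ℂ] E) : Prop where
  map_add : ∀ s t : ℝ, α (s + t) = (α s).comp (α t)
  map_zero : α 0 = ContinuousLinearMap.id ℂ E
  norm_le : ∀ t : ℝ, ‖α t‖ ≤ 1
  strong_cont : ∀ a : E, Continuous fun t : ℝ => α t a

/-- `(a, b)` lies in the graph of the analytic continuation `α_z`:  there is a function `f`,
continuous on the strip `S(z)`, analytic in its interior, agreeing with `t ↦ α_t a` on `ℝ`,
with `f z = b`. -/
def HasContVal {E : Type*} [NormedAddCommGroup E] [NormedSpace ℂ E]
    (α : ℝ → E →L[ℂ] E) (z : ℂ) (a b : E) : Prop :=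
  ∃ f : ℂ → E, ContinuousOn f (hStrip z) ∧
    DifferentiableOn ℂ f (interior (hStrip z)) ∧
    (∀ t : ℝ, f t = α t a) ∧ f z = b

/-!
If `f` is continuous on the closed strip, holomorphic inside it and vanishes on one edge, then `f`
vanishes: multiply it by large powers of a holomorphic `g` with `|g| = 1` on the other three sides
of a rectangle resting on that edge and `|g| > 1` inside, and apply the maximum principle. Hence a
function on the strip is determined by its values on `ℝ`. If `f` continues `t ↦ α_t a` and
`b = f z`, comparing `y ↦ f (y + t)` with `y ↦ α_t (f y)` gives `f (t + z) = α_t b`, so that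
`y ↦ f (y + z)` continues the orbit of `b` and takes the value `a` at `-z`.
-/

section MaximumPrinciple

theorem eq_zero_of_frontier_eq_zero_or_norm_le_one
    {V E : Type*} [NormedAddCommGroup V] [NormedSpace ℂ V] [Nontrivial V] [ProperSpace V]
    [NormedAddCommGroup E] [NormedSpace ℂ E] {U : Set V} {f : V → E} {g : V → ℂ}
    (hU : Bornology.IsBounded U) (hf : DiffContOnCl ℂ f U) (hg : DiffContOnCl ℂ g U)
    (h : ∀ y ∈ frontier U, f y = 0 ∨ ‖g y‖ ≤ 1) {p : V} (hp : p ∈ closure U)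
    (hgp : 1 < ‖g p‖) : f p = 0 := by
  obtain ⟨M, hM⟩ := hU.isCompact_closure.exists_bound_of_continuousOn hf.continuousOn
  have hM0 : 0 ≤ M := (norm_nonneg _).trans (hM p hp)
  have hbound (n : ℕ) : ‖g p‖ ^ n * ‖f p‖ ≤ M := by
    have hgf : DiffContOnCl ℂ (fun y => g y ^ n • f y) U :=
      DiffContOnCl.smul ⟨hg.differentiableOn.pow n, hg.continuousOn.pow n⟩ hf
    have hfrontier : ∀ y ∈ frontier U, ‖g y ^ n • f y‖ ≤ M := by
      intro y hy
      rcases h y hy with hfy | hgy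
      · simpa [hfy] using hM0
      · rw [norm_smul, norm_pow]
        exact (mul_le_of_le_one_left (norm_nonneg _) (pow_le_one₀ (norm_nonneg _) hgy)).trans
          (hM y (frontier_subset_closure hy))
    simpa only [norm_smul, norm_pow] using
      norm_le_of_forall_mem_frontier_norm_le hU hgf hfrontier hp
  by_contra hne
  have hfp : 0 < ‖f p‖ := norm_pos_iff.2 hne
  obtain ⟨n, hn⟩ := pow_unbounded_of_one_lt (M / ‖f p‖) hgp
  exact ((div_lt_iff₀ hfp).1 hn).not_ge (hbound n)

end MaximumPrinciple

section Strip

variable {a b c d : ℝ}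

theorem frontier_uIoo_of_ne (hcd : c ≠ d) : frontier (uIoo c d) = {c, d} := by
  rcases hcd.lt_or_gt with h | h
  · rw [uIoo_of_lt h, frontier_Ioo h]
  · rw [uIoo_of_gt h, frontier_Ioo h, pair_comm]

theorem im_cos (y : ℂ) : (cos y).im = -(Real.sin y.re * Real.sinh y.im) := by
  rw [cos_eq]
  simp [← ofReal_sin, ← ofReal_cos, ← ofReal_sinh, ← ofReal_cosh]

theorem exists_differentiable_norm_eq_one_on_three_sides (hab : a < b) (c d : ℝ) :
    ∃ g : ℂ → ℂ, Differentiable ℂ g ∧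
      (∀ y : ℂ, y.re = a ∨ y.re = b ∨ y.im = d → ‖g y‖ = 1) ∧
      ∀ y ∈ Ioo a b ×ℂ uIoo c d, 1 < ‖g y‖ := by
  set k : ℝ := Real.pi / (b - a)
  have hk : 0 < k := div_pos Real.pi_pos (sub_pos.2 hab)
  have hkb : k * (b - a) = Real.pi := div_mul_cancel₀ _ (sub_pos.2 hab).ne'
  -- `sin (k (x - a)) * sinh (k (d - y))` is harmonic and vanishes on the lines `x = a`, `x = b`
  -- and `y = d`; it is the imaginary part of the cosine below.
  let g : ℂ → ℂ := fun y => cexp (-I * ((d - c : ℝ) * cos (k * (y - (a + d * I)))))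
  have hnorm (y : ℂ) : ‖g y‖ =
      Real.exp (Real.sin (k * (y.re - a)) * ((d - c) * Real.sinh (k * (d - y.im)))) := by
    have hsinh : Real.sinh (k * (y.im - d)) = -Real.sinh (k * (d - y.im)) := by
      rw [← Real.sinh_neg]; ring_nf
    simp only [g, norm_exp, neg_mul, neg_re, I_mul_re, neg_neg, im_ofReal_mul, im_cos,
      re_ofReal_mul, sub_re, sub_im, add_re, add_im, ofReal_re, ofReal_im, mul_I_re, mul_I_im,
      neg_zero, add_zero, zero_add, hsinh]
    ring_nf
  refine ⟨g, by fun_prop, fun y hy => ?_, fun y ⟨hre, him⟩ => ?_⟩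
  · rw [hnorm]
    rcases hy with h | h | h <;> simp [h, hkb]
  · have hsin : 0 < Real.sin (k * (y.re - a)) :=
      Real.sin_pos_of_pos_of_lt_pi (mul_pos hk (sub_pos.2 hre.1))
        (hkb ▸ mul_lt_mul_of_pos_left (sub_lt_sub_right hre.2 a) hk)
    have hsinh : 0 < (d - c) * Real.sinh (k * (d - y.im)) := by
      rw [mem_preimage, uIoo_eq_union] at him
      rcases him with ⟨hc, hd⟩ | ⟨hd, hc⟩
      · exact mul_pos (by linarith) (Real.sinh_pos_iff.2 (mul_pos hk (sub_pos.2 hd)))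
      · exact mul_pos_of_neg_of_neg (by linarith)
          (Real.sinh_neg_iff.2 (mul_neg_of_pos_of_neg hk (sub_neg.2 hd)))
    rw [hnorm, Real.one_lt_exp_iff]
    exact mul_pos hsin hsinh

variable {E : Type*} [NormedAddCommGroup E] [NormedSpace ℂ E] {f g : ℂ → E}

theorem eqOn_zero_rectangle_of_eqOn_zero_side (hf : DiffContOnCl ℂ f (Ioo a b ×ℂ uIoo c d))
    (h : EqOn f 0 (Icc a b ×ℂ {c})) : EqOn f 0 (Ioo a b ×ℂ uIoo c d) := by
  intro p hp
  have hab : a < b := nonempty_Ioo.1 ⟨_, hp.1⟩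
  have hcd : c ≠ d := nonempty_uIoo.1 ⟨_, hp.2⟩
  obtain ⟨g, hg, hside, hinside⟩ := exists_differentiable_norm_eq_one_on_three_sides hab c d
  have hbounded : Bornology.IsBounded (Ioo a b ×ℂ uIoo c d) :=
    (Metric.isBounded_Ioo a b).reProdIm (Metric.isBounded_Ioo _ _)
  refine eq_zero_of_frontier_eq_zero_or_norm_le_one hbounded hf hg.diffContOnCl
    (fun y hy => ?_) (subset_closure hp) (hinside p hp)
  rw [frontier_reProdIm, closure_Ioo hab.ne, frontier_Ioo hab, frontier_uIoo_of_ne hcd] at hy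
  rcases hy with ⟨hre, hc | hd⟩ | ⟨ha | hb, -⟩
  · exact Or.inl (h ⟨hre, hc⟩)
  · exact Or.inr (hside y (Or.inr (Or.inr hd))).le
  · exact Or.inr (hside y (Or.inl ha)).le
  · exact Or.inr (hside y (Or.inr (Or.inl hb))).le

theorem eqOn_strip_of_eqOn_edge (hf : ContinuousOn f (im ⁻¹' uIcc c d))
    (hf' : DifferentiableOn ℂ f (im ⁻¹' uIoo c d)) (hg : ContinuousOn g (im ⁻¹' uIcc c d))
    (hg' : DifferentiableOn ℂ g (im ⁻¹' uIoo c d)) (h : EqOn f g (im ⁻¹' {c})) :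
    EqOn f g (im ⁻¹' uIcc c d) := by
  rcases eq_or_ne c d with rfl | hcd
  · rwa [uIcc_self]
  have hclosure : closure (im ⁻¹' uIoo c d) = im ⁻¹' uIcc c d := by
    rw [closure_preimage_im, closure_uIoo hcd]
  have hfg : DiffContOnCl ℂ (f - g) (im ⁻¹' uIoo c d) :=
    ⟨hf'.sub hg', hclosure ▸ hf.sub hg⟩
  have hinside : EqOn f g (im ⁻¹' uIoo c d) := fun p hp =>
    sub_eq_zero.1 <| eqOn_zero_rectangle_of_eqOn_zero_side (a := p.re - 1) (b := p.re + 1)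
      (hfg.mono fun _ hy => hy.2) (fun _ hy => sub_eq_zero.2 (h hy.2))
      ⟨⟨by linarith, by linarith⟩, hp⟩
  exact hinside.of_subset_closure hf hg (preimage_mono uIoo_subset_uIcc_self) hclosure.ge

end Strip

section AnalyticContinuation

variable {E F : Type*} [NormedAddCommGroup E] [NormedSpace ℂ E]
  [NormedAddCommGroup F] [NormedSpace ℂ F]

theorem interior_hStrip (z : ℂ) : interior (hStrip z) = im ⁻¹' uIoo 0 z.im := by
  change interior (im ⁻¹' uIcc 0 z.im) = _
  rw [interior_preimage_im, uIcc, interior_Icc, uIoo]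

theorem self_mem_hStrip (z : ℂ) : z ∈ hStrip z := right_mem_uIcc

theorem mapsTo_add_ofReal_hStrip (z : ℂ) (t : ℝ) : MapsTo (· + (t : ℂ)) (hStrip z) (hStrip z) :=
  fun y hy => by simpa [hStrip] using hy

theorem mapsTo_add_self_hStrip_neg (z : ℂ) : MapsTo (· + z) (hStrip (-z)) (hStrip z) := by
  intro y hy
  simp only [hStrip, mem_ofPred_eq, neg_im, add_im, mem_uIcc] at hy ⊢
  rcases hy with h | h
  · right; constructor <;> linarith
  · left; constructor <;> linarith

/-- The regularity required of an analytic continuation to the closed strip `S(z)`. It is not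
`DiffContOnCl ℂ f (interior (hStrip z))`: for real `z` the interior is empty, while continuity on
the line `hStrip z` is still required. -/
structure DiffContOnHStrip (f : ℂ → E) (z : ℂ) : Prop where
  continuousOn : ContinuousOn f (hStrip z)
  differentiableOn : DifferentiableOn ℂ f (interior (hStrip z))

namespace DiffContOnHStrip

variable {f g : ℂ → E} {z z' w : ℂ}

theorem comp_add_right (hf : DiffContOnHStrip f z) (hw : MapsTo (· + w) (hStrip z') (hStrip z)) :
    DiffContOnHStrip (fun y => f (y + w)) z' where
  continuousOn := hf.continuousOn.comp (by fun_prop) hw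
  differentiableOn := hf.differentiableOn.comp (by fun_prop)
    ((Homeomorph.addRight w).isOpenMap.mapsTo_interior hw)

theorem clm_comp (hf : DiffContOnHStrip f z) (L : E →L[ℂ] F) :
    DiffContOnHStrip (fun y => L (f y)) z where
  continuousOn := L.continuous.comp_continuousOn hf.continuousOn
  differentiableOn := L.differentiable.comp_differentiableOn hf.differentiableOn

theorem eqOn_of_eq_on_real (hf : DiffContOnHStrip f z) (hg : DiffContOnHStrip g z)
    (h : ∀ t : ℝ, f t = g t) : EqOn f g (hStrip z) := by
  refine eqOn_strip_of_eqOn_edge hf.continuousOn (interior_hStrip z ▸ hf.differentiableOn)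
    hg.continuousOn (interior_hStrip z ▸ hg.differentiableOn) fun y (hy : y.im = 0) => ?_
  have hre : (y.re : ℂ) = y := Complex.ext rfl hy.symm
  exact hre ▸ h y.re

theorem apply_add_ofReal {α : ℝ → E →L[ℂ] E} {a : E}
    (hadd : ∀ s t : ℝ, α (s + t) = (α s).comp (α t)) (hf : DiffContOnHStrip f z)
    (hfα : ∀ t : ℝ, f t = α t a) (t : ℝ) :
    EqOn (fun y => f (y + t)) (fun y => α t (f y)) (hStrip z) := by
  refine (hf.comp_add_right (mapsTo_add_ofReal_hStrip z t)).eqOn_of_eq_on_real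
    (hf.clm_comp (α t)) fun s => ?_
  rw [← ofReal_add, hfα, hfα, add_comm, hadd, ContinuousLinearMap.comp_apply]

end DiffContOnHStrip

namespace HasContVal

variable {α : ℝ → E →L[ℂ] E} {z : ℂ} {a b c : E}

theorem unique (hb : HasContVal α z a b) (hc : HasContVal α z a c) : b = c := by
  obtain ⟨f, hfc, hfd, hf, rfl⟩ := hb
  obtain ⟨g, hgc, hgd, hg, rfl⟩ := hc
  exact DiffContOnHStrip.eqOn_of_eq_on_real ⟨hfc, hfd⟩ ⟨hgc, hgd⟩
    (fun t => (hf t).trans (hg t).symm) (self_mem_hStrip z)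

theorem neg_swap (hzero : α 0 = ContinuousLinearMap.id ℂ E)
    (hadd : ∀ s t : ℝ, α (s + t) = (α s).comp (α t)) (h : HasContVal α z a b) :
    HasContVal α (-z) b a := by
  obtain ⟨f, hfc, hfd, hfα, rfl⟩ := h
  have hf : DiffContOnHStrip f z := ⟨hfc, hfd⟩
  have hf' := hf.comp_add_right (mapsTo_add_self_hStrip_neg z)
  refine ⟨fun y => f (y + z), hf'.continuousOn, hf'.differentiableOn, fun t => ?_, ?_⟩
  · simpa only [add_comm] using hf.apply_add_ofReal hadd hfα t (self_mem_hStrip z)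
  · simpa [hzero] using hfα 0

end HasContVal

theorem hasContVal_neg_swap_iff {α : ℝ → E →L[ℂ] E} (hzero : α 0 = ContinuousLinearMap.id ℂ E)
    (hadd : ∀ s t : ℝ, α (s + t) = (α s).comp (α t)) {z : ℂ} {a b : E} :
    HasContVal α (-z) b a ↔ HasContVal α z a b :=
  ⟨fun h => by simpa using h.neg_swap hzero hadd, fun h => h.neg_swap hzero hadd⟩

theorem cont_injective_inverse_general {α : ℝ → E →L[ℂ] E}
    (hzero : α 0 = ContinuousLinearMap.id ℂ E)
    (hadd : ∀ s t : ℝ, α (s + t) = (α s).comp (α t)) (z : ℂ) :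
    (∀ a b : E, HasContVal α z a b → HasContVal α (-z) b a) ∧
    (∀ a b c : E, HasContVal α z a c → HasContVal α z b c → a = b) ∧
    {b : E | ∃ a, HasContVal α z a b} = {b : E | ∃ c, HasContVal α (-z) b c} ∧
    {a : E | ∃ b, HasContVal α z a b} = {a : E | ∃ c, HasContVal α (-z) c a} := by
  refine ⟨fun a b h => h.neg_swap hzero hadd,
    fun a b c ha hb => (ha.neg_swap hzero hadd).unique (hb.neg_swap hzero hadd), ?_, ?_⟩ <;>
  simp only [hasContVal_neg_swap_iff hzero hadd]

end AnalyticContinuation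

/-- `α_z` is injective with inverse `α_{-z}`; consequently `Ran α_z = D(α_{-z})`
and `D(α_z) = Ran α_{-z}`. -/
theorem cont_injective_inverse
    {E : Type*} [NormedAddCommGroup E] [NormedSpace ℂ E] [CompleteSpace E]
    {α : ℝ → E →L[ℂ] E} (hα : IsOneParamRep α) (z : ℂ) :
    (∀ a b : E, HasContVal α z a b → HasContVal α (-z) b a) ∧
    (∀ a b c : E, HasContVal α z a c → HasContVal α z b c → a = b) ∧
    {b : E | ∃ a, HasContVal α z a b} = {b : E | ∃ c, HasContVal α (-z) b c} ∧
    {a : E | ∃ b, HasContVal α z a b} = {a : E | ∃ c, HasContVal α (-z) c a} :=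
  cont_injective_inverse_general hα.map_zero hα.map_add z
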